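/- arXiv:1905.07225 — 9 statements merged into one kernel-verified Lean document; each statement's English description precedes it below -/
import Mathlib

section
/- For all η,η' ∈ ℂ and all w,x,y,z ∈ ℤ/3ℤ with y ≠ z, the generalized median operator satisfies the matrix identity (J^z − J^y) · M^{wx/yz}[η,η'] = J^x · S[η,η'] − J^w. -/
noncomputable def ω : ℂ := Complex.exp (2 * Real.pi * Complex.I / 3)

def J : Matrix (Fin 3) (Fin 3) ℂ := !![0,1,0; 0,0,1; 1,0,0]

noncomputable def W : Matrix (Fin 3) (Fin 3) ℂ := !![1,1,1; 1,ω,ω^2; 1,ω^2,ω]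

/-- generalized cevian operator `S[η,η'] = W ⬝ diag(1,η',η) ⬝ W⁻¹` -/
noncomputable def S (η η' : ℂ) : Matrix (Fin 3) (Fin 3) ℂ :=
  W * Matrix.diagonal ![1, η', η] * W⁻¹

/-- `ω^k` for `k : ZMod 3` (well defined since `ω^3 = 1`). -/
noncomputable def ωz (k : ZMod 3) : ℂ := ω ^ k.val

/-- `J^k` for `k : ZMod 3` (well defined since `J^3 = 1`). -/
def Jz (k : ZMod 3) : Matrix (Fin 3) (Fin 3) ℂ := J ^ k.val

/-- generalized median operator `M^{wx/yz}[η,η']` -/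
noncomputable def M (η η' : ℂ) (w x y z : ZMod 3) : Matrix (Fin 3) (Fin 3) ℂ :=
  S ((η * ωz (-x) - ωz (-w)) / (ωz (-z) - ωz (-y)))
    ((η' * ωz x - ωz w) / (ωz z - ωz y))

theorem isPrimitiveRoot_ω : IsPrimitiveRoot ω 3 := by
  simpa [ω] using Complex.isPrimitiveRoot_exp 3 (by norm_num)

theorem one_add_ω_add_ω_sq : 1 + ω + ω ^ 2 = 0 := by
  simpa [Finset.sum_range_succ] using isPrimitiveRoot_ω.geom_sum_eq_zero (by norm_num)

theorem isUnit_det_W : IsUnit W.det := by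
  have h := one_add_ω_add_ω_sq
  have h1 : ω ≠ 1 := isPrimitiveRoot_ω.ne_one (by norm_num)
  have h0 : ω ≠ 0 := isPrimitiveRoot_ω.ne_zero (by norm_num)
  have hdet : W.det = 3 * ω * (ω - 1) := by
    simp [W, Matrix.det_fin_three]
    linear_combination (ω - ω ^ 2) * h
  rw [hdet, isUnit_iff_ne_zero]
  exact mul_ne_zero (mul_ne_zero three_ne_zero h0) (sub_ne_zero.mpr h1)

theorem ωz_injective : Function.Injective ωz := fun _ _ h =>
  ZMod.val_injective 3 (isPrimitiveRoot_ω.pow_inj (ZMod.val_lt _) (ZMod.val_lt _) h)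

theorem ωz_neg (k : ZMod 3) : ωz (-k) = (ω ^ 2) ^ k.val := by
  have hmod : ∀ k : ZMod 3, (-k).val = 2 * k.val % 3 := by decide
  rw [← pow_mul, ωz, hmod, ← pow_eq_pow_mod _ isPrimitiveRoot_ω.pow_eq_one]

theorem J_mul_W : J * W = W * Matrix.diagonal ![1, ω, ω ^ 2] := by
  have h3 : ω ^ 3 = 1 := isPrimitiveRoot_ω.pow_eq_one
  ext i j
  fin_cases i <;> fin_cases j <;>
    simp [J, W, Matrix.mul_apply, Fin.sum_univ_three] <;> grind

theorem Jz_mul_W (k : ZMod 3) :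
    Jz k * W = W * Matrix.diagonal ![1, ωz k, ωz (-k)] := by
  have h : SemiconjBy W (Matrix.diagonal ![1, ω, ω ^ 2]) J := J_mul_W.symm
  rw [Jz, ← (h.pow_right k.val).eq, Matrix.diagonal_pow]
  congr 2
  ext i
  fin_cases i
  · simp
  · simp [ωz]
  · simp [ωz_neg]

theorem Jz_mul_S (k : ZMod 3) (η η' : ℂ) :
    Jz k * S η η' = W * Matrix.diagonal ![1, ωz k * η', ωz (-k) * η] * W⁻¹ := by
  rw [S, ← mul_assoc, ← mul_assoc, Jz_mul_W, mul_assoc W, Matrix.diagonal_mul_diagonal]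
  congr 3
  ext i
  fin_cases i <;> simp

theorem Jz_eq_conj_diagonal (k : ZMod 3) :
    Jz k = W * Matrix.diagonal ![1, ωz k, ωz (-k)] * W⁻¹ := by
  rw [← Jz_mul_W, Matrix.mul_nonsing_inv_cancel_right _ _ isUnit_det_W]

theorem median_matrix_identity (η η' : ℂ) (w x y z : ZMod 3) (hyz : y ≠ z) :
    (Jz z - Jz y) * M η η' w x y z = Jz x * S η η' - Jz w := by
  have hpos : ωz z - ωz y ≠ 0 := sub_ne_zero.mpr fun h => hyz (ωz_injective h).symm
  have hneg : ωz (-z) - ωz (-y) ≠ 0 :=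
    sub_ne_zero.mpr fun h => hyz (neg_injective (ωz_injective h)).symm
  rw [M, sub_mul, Jz_mul_S, Jz_mul_S, Jz_mul_S, Jz_eq_conj_diagonal w, ← sub_mul, ← sub_mul,
    ← mul_sub, ← mul_sub, Matrix.diagonal_sub, Matrix.diagonal_sub]
  congr 3
  ext i
  fin_cases i
  · simp
  · simp [← sub_mul, mul_div_cancel₀ _ hpos, mul_comm]
  · simp [← sub_mul, mul_div_cancel₀ _ hneg, mul_comm]
end

section
/- Let N = (1/3)(I + J + J²). For all y,z ∈ ℤ/3ℤ with y ≠ z, the matrix J^z − J^y + N is invertible; consequently, for all η,η' ∈ ℂ and w,x,y,z ∈ ℤ/3ℤ with y ≠ z, if ζ,ζ' ∈ ℂ satisfy (J^z − J^y) · S[ζ,ζ'] = J^x · S[η,η'] − J^w, then S[ζ,ζ'] = M^{wx/yz}[η,η']. -/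
theorem ω_pow_three : ω ^ 3 = 1 := isPrimitiveRoot_ω.pow_eq_one

theorem eq_conj_W_of_mul_W {A D : Matrix (Fin 3) (Fin 3) ℂ} (h : A * W = W * D) :
    A = W * D * W⁻¹ := by
  rw [← h, Matrix.mul_nonsing_inv_cancel_right _ _ isUnit_det_W]

theorem J_pow_mul_W (n : ℕ) :
    J ^ n * W = W * Matrix.diagonal ![1, ω ^ n, (ω ^ 2) ^ n] := by
  have h : J ^ n * W = W * Matrix.diagonal ![1, ω, ω ^ 2] ^ n :=
    (SemiconjBy.pow_right (show SemiconjBy W _ J from J_mul_W.symm) n).symm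
  rw [h, Matrix.diagonal_pow]
  congr 2
  ext i
  fin_cases i <;> simp

theorem S_mul_W (η η' : ℂ) : S η η' * W = W * Matrix.diagonal ![1, η', η] :=
  Matrix.nonsing_inv_mul_cancel_right _ _ isUnit_det_W

theorem average_mul_W :
    ((1 / 3 : ℂ) • (1 + J + J ^ 2)) * W = W * Matrix.diagonal ![1, 0, 0] := by
  have h := one_add_ω_add_ω_sq
  have h3 := ω_pow_three
  have hsum : ((1 / 3 : ℂ) • (1 + J + J ^ 2)) * W = W * (1 / 3 : ℂ) •
      (1 + Matrix.diagonal ![1, ω, ω ^ 2] + Matrix.diagonal ![1, ω ^ 2, (ω ^ 2) ^ 2]) := by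
    rw [Matrix.smul_mul, Matrix.mul_smul, add_mul, add_mul, one_mul, J_mul_W, J_pow_mul_W,
      mul_add, mul_add, mul_one]
  rw [hsum, ← Matrix.diagonal_one, Matrix.diagonal_add, Matrix.diagonal_add,
    ← Matrix.diagonal_smul]
  congr 2
  ext i
  fin_cases i <;> simp <;> grind

theorem Jz_sub_Jz_add_average (y z : ZMod 3) :
    Jz z - Jz y + (1 / 3 : ℂ) • (1 + J + J ^ 2) = S (ωz (-z) - ωz (-y)) (ωz z - ωz y) := by
  refine eq_conj_W_of_mul_W ?_
  rw [add_mul, sub_mul, Jz_mul_W, Jz_mul_W, average_mul_W, ← mul_sub, ← mul_add,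
    Matrix.diagonal_sub, Matrix.diagonal_add]
  congr 2
  ext i
  fin_cases i <;> simp

theorem isUnit_S {η η' : ℂ} (h : η ≠ 0) (h' : η' ≠ 0) : IsUnit (S η η') := by
  have hW : IsUnit W := (Matrix.isUnit_iff_isUnit_det W).2 isUnit_det_W
  refine (hW.mul ?_).mul (Matrix.isUnit_nonsing_inv_iff.2 hW)
  rw [Matrix.isUnit_diagonal, Pi.isUnit_iff]
  intro i
  fin_cases i <;> simp [h, h']

theorem eigenvalues_of_median_identity {η η' ζ ζ' : ℂ} {w x y z : ZMod 3}
    (h : (Jz z - Jz y) * S ζ ζ' = Jz x * S η η' - Jz w) :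
    (ωz z - ωz y) * ζ' = ωz x * η' - ωz w ∧
      (ωz (-z) - ωz (-y)) * ζ = ωz (-x) * η - ωz (-w) := by
  have hW : IsUnit W := (Matrix.isUnit_iff_isUnit_det W).2 isUnit_det_W
  have hmul := congrArg (· * W) h
  simp only [sub_mul, mul_assoc, S_mul_W, Jz_mul_W] at hmul
  simp only [← mul_assoc, Jz_mul_W] at hmul
  simp only [mul_assoc, ← mul_sub, Matrix.diagonal_mul_diagonal, Matrix.diagonal_sub] at hmul
  have hd := Matrix.diagonal_injective (hW.mul_left_cancel hmul)
  have h1 := congrFun hd 1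
  have h2 := congrFun hd 2
  simp only [Matrix.cons_val] at h1 h2
  exact ⟨by rw [sub_mul, h1], by rw [sub_mul, h2]⟩

theorem median_determined_by_identity :
    (∀ y z : ZMod 3, y ≠ z →
      IsUnit (Jz z - Jz y + (1/3 : ℂ) • ((1 : Matrix (Fin 3) (Fin 3) ℂ) + J + J ^ 2))) ∧
    (∀ (η η' : ℂ) (w x y z : ZMod 3), y ≠ z → ∀ ζ ζ' : ℂ,
      (Jz z - Jz y) * S ζ ζ' = Jz x * S η η' - Jz w → S ζ ζ' = M η η' w x y z) := by
  have hne : ∀ {y z : ZMod 3}, y ≠ z → ωz z - ωz y ≠ 0 := fun h =>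
    sub_ne_zero.2 (ωz_injective.ne h.symm)
  refine ⟨fun y z hyz => ?_, fun η η' w x y z hyz ζ ζ' h => ?_⟩
  · rw [Jz_sub_Jz_add_average]
    exact isUnit_S (hne (neg_injective.ne hyz)) (hne hyz)
  · obtain ⟨h1, h2⟩ := eigenvalues_of_median_identity h
    rw [M]
    congr 1
    · rw [eq_div_iff (hne (neg_injective.ne hyz))]
      linear_combination h2
    · rw [eq_div_iff (hne hyz)]
      linear_combination h1
end

section
/- For all η,η' ∈ ℂ and all w,x,y,z ∈ ℤ/3ℤ with y ≠ z, one has M^{wx/yz}[η,η'] · J = M^{(w+1)(x+1)/yz}[η,η']. -/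
theorem ωz_add (a b : ZMod 3) : ωz (a + b) = ωz a * ωz b := by
  rw [ωz, ωz, ωz, ZMod.val_add, ← pow_add, ← pow_eq_pow_mod _ ω_pow_three]

theorem ωz_one : ωz 1 = ω := pow_one ω

theorem ωz_neg_one : ωz (-1) = ω ^ 2 := rfl

theorem S_mul_J (η η' : ℂ) : S η η' * J = S (η * ω ^ 2) (η' * ω) := by
  have hJ : W⁻¹ * J = Matrix.diagonal ![1, ω, ω ^ 2] * W⁻¹ := by
    calc W⁻¹ * J = W⁻¹ * (J * W) * W⁻¹ := by
          rw [← Matrix.mul_assoc, Matrix.mul_nonsing_inv_cancel_right _ _ isUnit_det_W]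
      _ = Matrix.diagonal ![1, ω, ω ^ 2] * W⁻¹ := by
          rw [J_mul_W, Matrix.nonsing_inv_mul_cancel_left _ _ isUnit_det_W]
  have hD : Matrix.diagonal ![1, η', η] * Matrix.diagonal ![1, ω, ω ^ 2] =
      Matrix.diagonal ![1, η' * ω, η * ω ^ 2] := by
    rw [Matrix.diagonal_mul_diagonal]
    congr 1
    ext i
    fin_cases i <;> simp
  rw [S, S, Matrix.mul_assoc, hJ, ← Matrix.mul_assoc, Matrix.mul_assoc W, hD]

theorem median_mul_J (η η' : ℂ) (w x y z : ZMod 3) (hyz : y ≠ z) :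
    M η η' w x y z * J = M η η' (w + 1) (x + 1) y z := by
  rw [M, M, S_mul_J]
  simp only [neg_add, ωz_add, ωz_one, ωz_neg_one]
  congr 1 <;> ring
end

section
/- For all η,η' ∈ ℂ and all w,x,y,z ∈ ℤ/3ℤ with y ≠ z, one has (1/2)·(M^{wx/yz}[η,η'] + M^{wx/zy}[η,η']) = (1/3)·(I + J + J²). -/
theorem det_W : W.det = 3 * ω * (ω - 1) := by
  rw [W, Matrix.det_fin_three]
  simp only [Matrix.of_apply, Matrix.cons_val]
  linear_combination -ω * (ω - 1) * one_add_ω_add_ω_sq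

/-- Swapping the last two indices negates both nontrivial eigenvalues of the median operator. -/
theorem M_swap (η η' : ℂ) (w x y z : ZMod 3) :
    M η η' w x z y =
      S (-((η * ωz (-x) - ωz (-w)) / (ωz (-z) - ωz (-y))))
        (-((η' * ωz x - ωz w) / (ωz z - ωz y))) := by
  rw [M, ← div_neg, ← div_neg, neg_sub, neg_sub]

theorem S_add_S_neg (a b : ℂ) : S a b + S (-a) (-b) = (2 : ℂ) • S 0 0 := by
  have h : Matrix.diagonal ![1, b, a] + Matrix.diagonal ![1, -b, -a] =
      (2 : ℂ) • Matrix.diagonal ![(1 : ℂ), 0, 0] := by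
    rw [Matrix.diagonal_add, ← Matrix.diagonal_smul]
    congr 1
    ext i
    fin_cases i <;> norm_num
  rw [S, S, S, ← add_mul, ← mul_add, h, mul_smul_comm, smul_mul_assoc]

/-- The cevian operator with both parameters zero sends a triangle to its centroid. -/
theorem S_zero_zero :
    S 0 0 = (1 / 3 : ℂ) • ((1 : Matrix (Fin 3) (Fin 3) ℂ) + J + J ^ 2) := by
  have h : W * Matrix.diagonal ![1, 0, 0] =
      (1 / 3 : ℂ) • ((1 : Matrix (Fin 3) (Fin 3) ℂ) + J + J ^ 2) * W := by
    have hω := one_add_ω_add_ω_sq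
    ext i j
    fin_cases i <;> fin_cases j <;>
      simp [W, J, pow_two, Matrix.mul_apply, Fin.sum_univ_three, Matrix.one_apply] <;>
      grind
  rw [S, h, Matrix.mul_nonsing_inv_cancel_right _ _ isUnit_det_W]

theorem median_point_symmetry (η η' : ℂ) (w x y z : ZMod 3) (hyz : y ≠ z) :
    (1/2 : ℂ) • (M η η' w x y z + M η η' w x z y) =
      (1/3 : ℂ) • ((1 : Matrix (Fin 3) (Fin 3) ℂ) + J + J ^ 2) := by
  rw [M_swap η η' w x y z, M, S_add_S_neg, S_zero_zero, smul_smul]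
  norm_num
end

section
/- For every s ∈ ℂ, Hajja's operator H_s := S[s+ω, s+ω²] and the binary Ceva operators satisfy H_s · H_s = S[−1,−1] · C_{1−s} · C_s. -/
/-- binary Ceva operator `C_s` -/
noncomputable def C (s : ℂ) : Matrix (Fin 3) (Fin 3) ℂ :=
  W * !![1,0,0; 0,0,s+ω; 0,s+ω^2,0] * W⁻¹

/-- Hajja's operator `H_s` -/
noncomputable def H (s : ℂ) : Matrix (Fin 3) (Fin 3) ℂ := S (s+ω) (s+ω^2)

theorem det_W_sq : W.det ^ 2 = -27 := by
  have h := one_add_ω_add_ω_sq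
  have h3 : ω ^ 3 = 1 := isPrimitiveRoot_ω.pow_eq_one
  simp only [W, Matrix.det_fin_three, Matrix.of_apply, Matrix.cons_val]
  grind

theorem W_conj_mul_W_conj (A B : Matrix (Fin 3) (Fin 3) ℂ) :
    W * A * W⁻¹ * (W * B * W⁻¹) = W * (A * B) * W⁻¹ := by
  simp only [Matrix.mul_assoc, Matrix.nonsing_inv_mul_cancel_left _ _ isUnit_det_W]

theorem hajja_squared_eq_ceva (s : ℂ) :
    H s * H s = S (-1) (-1) * C (1 - s) * C s := by
  have h := one_add_ω_add_ω_sq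
  simp only [H, S, C, W_conj_mul_W_conj]
  congr 2
  ext i j
  fin_cases i <;> fin_cases j <;>
    simp [Matrix.mul_apply, Fin.sum_univ_three, Matrix.diagonal_apply] <;> grind
end

section
/- Let s ∈ ℂ with s ≠ −ω and s ≠ −ω², and let Δ, Δ' ∈ ℂ³ satisfy ψ₁(Δ) ≠ 0, ψ₂(Δ) ≠ 0, ψ₁(Δ') ≠ 0, ψ₂(Δ') ≠ 0. If Δ is reversely similar to Δ', i.e. ψ(Δ)³ · ψ(Δ')³ = 1, then C_s(Δ) is reversely similar to C_{1−s}(Δ'), i.e. ψ(C_s·Δ)³ · ψ(C_{1−s}·Δ')³ = 1 (with ψ₁ of both images nonzero). -/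
noncomputable def ψ₀ (Δ : Fin 3 → ℂ) : ℂ := (Δ 0 + Δ 1 + Δ 2) / 3
noncomputable def ψ₁ (Δ : Fin 3 → ℂ) : ℂ := (Δ 0 + Δ 1 * ω^2 + Δ 2 * ω) / 3
noncomputable def ψ₂ (Δ : Fin 3 → ℂ) : ℂ := (Δ 0 + Δ 1 * ω + Δ 2 * ω^2) / 3
noncomputable def ψ (Δ : Fin 3 → ℂ) : ℂ := ψ₂ Δ / ψ₁ Δ

theorem ω_sq : ω ^ 2 = -1 - ω := by
  have h := isPrimitiveRoot_ω.geom_sum_eq_zero (by norm_num)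
  simp only [Finset.sum_range_succ, Finset.sum_range_zero] at h
  linear_combination h

theorem ψ₁_W_mulVec (v : Fin 3 → ℂ) : ψ₁ (W.mulVec v) = v 1 := by
  simp only [ψ₁, W, Matrix.mulVec, dotProduct, Fin.sum_univ_three, Matrix.of_apply,
    Matrix.cons_val]
  grind [ω_sq]

theorem ψ₂_W_mulVec (v : Fin 3 → ℂ) : ψ₂ (W.mulVec v) = v 2 := by
  simp only [ψ₂, W, Matrix.mulVec, dotProduct, Fin.sum_univ_three, Matrix.of_apply,
    Matrix.cons_val]
  grind [ω_sq]

theorem W_mulVec_inv_mulVec (Δ : Fin 3 → ℂ) : W.mulVec (W⁻¹.mulVec Δ) = Δ := by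
  rw [Matrix.mulVec_mulVec, Matrix.mul_nonsing_inv _ isUnit_det_W, Matrix.one_mulVec]

theorem W_inv_mulVec_one (Δ : Fin 3 → ℂ) : W⁻¹.mulVec Δ 1 = ψ₁ Δ := by
  rw [← ψ₁_W_mulVec (W⁻¹.mulVec Δ), W_mulVec_inv_mulVec]

theorem W_inv_mulVec_two (Δ : Fin 3 → ℂ) : W⁻¹.mulVec Δ 2 = ψ₂ Δ := by
  rw [← ψ₂_W_mulVec (W⁻¹.mulVec Δ), W_mulVec_inv_mulVec]

theorem ψ₁_C_mulVec (s : ℂ) (Δ : Fin 3 → ℂ) :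
    ψ₁ ((C s).mulVec Δ) = (s + ω) * ψ₂ Δ := by
  rw [C, ← Matrix.mulVec_mulVec, ← Matrix.mulVec_mulVec, ψ₁_W_mulVec, ← W_inv_mulVec_two]
  generalize W⁻¹.mulVec Δ = v
  simp [Matrix.mulVec, dotProduct, Fin.sum_univ_three]

theorem ψ₂_C_mulVec (s : ℂ) (Δ : Fin 3 → ℂ) :
    ψ₂ ((C s).mulVec Δ) = (s + ω ^ 2) * ψ₁ Δ := by
  rw [C, ← Matrix.mulVec_mulVec, ← Matrix.mulVec_mulVec, ψ₂_W_mulVec, ← W_inv_mulVec_one]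
  generalize W⁻¹.mulVec Δ = v
  simp [Matrix.mulVec, dotProduct, Fin.sum_univ_three]

theorem ψ_C_mulVec (s : ℂ) (Δ : Fin 3 → ℂ) :
    ψ ((C s).mulVec Δ) = (s + ω ^ 2) / (s + ω) * (ψ Δ)⁻¹ := by
  rw [ψ, ψ, ψ₁_C_mulVec, ψ₂_C_mulVec, inv_div, div_mul_div_comm]

theorem ceva_preserves_reverse_similarity (s : ℂ) (hs1 : s ≠ -ω) (hs2 : s ≠ -ω ^ 2)
    (Δ Δ' : Fin 3 → ℂ) (h1 : ψ₁ Δ ≠ 0) (h2 : ψ₂ Δ ≠ 0)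
    (h1' : ψ₁ Δ' ≠ 0) (h2' : ψ₂ Δ' ≠ 0)
    (hrev : (ψ Δ) ^ 3 * (ψ Δ') ^ 3 = 1) :
    ψ₁ ((C s).mulVec Δ) ≠ 0 ∧ ψ₁ ((C (1 - s)).mulVec Δ') ≠ 0 ∧
    (ψ ((C s).mulVec Δ)) ^ 3 * (ψ ((C (1 - s)).mulVec Δ')) ^ 3 = 1 := by
  have ha : s + ω ≠ 0 := fun h => hs1 (eq_neg_of_add_eq_zero_left h)
  have hb : s + ω ^ 2 ≠ 0 := fun h => hs2 (eq_neg_of_add_eq_zero_left h)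
  have ha' : 1 - s + ω ^ 2 = -(s + ω) := by linear_combination ω_sq
  have hb' : 1 - s + ω = -(s + ω ^ 2) := by linear_combination ω_sq
  refine ⟨?_, ?_, ?_⟩
  · rw [ψ₁_C_mulVec]
    exact mul_ne_zero ha h2
  · rw [ψ₁_C_mulVec, hb']
    exact mul_ne_zero (neg_ne_zero.2 hb) h2'
  · rw [ψ_C_mulVec, ψ_C_mulVec, ha', hb', neg_div_neg_eq]
    calc ((s + ω ^ 2) / (s + ω) * (ψ Δ)⁻¹) ^ 3 * ((s + ω) / (s + ω ^ 2) * (ψ Δ')⁻¹) ^ 3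
        = ((s + ω ^ 2) / (s + ω) * ((s + ω) / (s + ω ^ 2))) ^ 3 *
            (ψ Δ ^ 3 * ψ Δ' ^ 3)⁻¹ := by
          rw [mul_inv, ← inv_pow, ← inv_pow]
          ring
      _ = 1 := by rw [hrev, div_mul_div_cancel₀ ha, div_self hb, one_pow, inv_one, mul_one]
end

section
/- Let η,η' ∈ ℂ. The operator S[η,η'] commutes with all real affine transformations of the plane — i.e., for every λ,μ,ν ∈ ℂ and every (a,b,c) ∈ ℂ³, applying S[η,η'] to (f(a),f(b),f(c)) equals applying f componentwise to S[η,η']·(a,b,c)ᵀ, where f(z) = λz + μ·conj(z) + ν — if and only if η' = conj(η). -/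
theorem conj_ω : (starRingEnd ℂ) ω = -1 - ω := by
  have hinv : (starRingEnd ℂ) ω = ω⁻¹ :=
    (Complex.inv_eq_conj (isPrimitiveRoot_ω.norm'_eq_one (by norm_num))).symm
  rw [hinv, ← ω_sq]
  exact inv_eq_of_mul_eq_one_right (by linear_combination isPrimitiveRoot_ω.pow_eq_one)

theorem conj_three : (starRingEnd ℂ) 3 = 3 := map_ofNat _ 3

theorem W_inv : W⁻¹ = (1 / 3 : ℂ) • !![1, 1, 1; 1, ω ^ 2, ω; 1, ω, ω ^ 2] := by
  apply Matrix.inv_eq_right_inv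
  ext i j
  fin_cases i <;> fin_cases j <;>
    simp [W, Matrix.mul_apply, Fin.sum_univ_three] <;> grind [ω_sq]

/-- The cevian operator is a circulant matrix. -/
theorem S_eq_circulant (η η' : ℂ) :
    S η η' = (1 / 3 : ℂ) •
      !![1 + η' + η, 1 + η' * ω ^ 2 + η * ω, 1 + η' * ω + η * ω ^ 2;
         1 + η' * ω + η * ω ^ 2, 1 + η' + η, 1 + η' * ω ^ 2 + η * ω;
         1 + η' * ω ^ 2 + η * ω, 1 + η' * ω + η * ω ^ 2, 1 + η' + η] := by
  rw [S, W_inv]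
  ext i j
  fin_cases i <;> fin_cases j <;>
    simp [W, Matrix.mul_apply, Fin.sum_univ_three, Matrix.vecMul_diagonal] <;> grind [ω_sq]

theorem cevian_commutes_with_real_affine_iff (η η' : ℂ) :
    (∀ l m ν : ℂ, ∀ Δ : Fin 3 → ℂ,
      (S η η').mulVec (fun i => l * Δ i + m * (starRingEnd ℂ) (Δ i) + ν) =
        fun i => l * ((S η η').mulVec Δ i) + m * (starRingEnd ℂ) ((S η η').mulVec Δ i) + ν)
    ↔ η' = (starRingEnd ℂ) η := by
  rw [S_eq_circulant]
  constructor
  · intro h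
    have h0 := congrFun (h 0 1 0 ![1, ω ^ 2, ω]) 0
    simp [Matrix.mulVec, dotProduct, Fin.sum_univ_three, conj_ω, conj_three, ω_sq] at h0
    clear h
    grind [ω_sq]
  · rintro rfl l m ν Δ
    ext i
    fin_cases i <;>
      simp [Matrix.mulVec, dotProduct, Fin.sum_univ_three, conj_ω, conj_three, ω_sq] <;> ring
end

section
/- Let Δ ∈ ℂ³ satisfy ψ₁(Δ) ≠ 0 and ψ₂(Δ) ≠ 0, let η,η' : ℝ → ℂ be functions, and set Δ(t) := S[η(t),η'(t)]·Δ. Then the family {Δ(t)} has a single tracing orbit in ascending order — i.e., J·Δ(t) = Δ(t + 1/3) for all t ∈ ℝ — if and only if η(t + 1/3) = η(t)·ω⁻¹ and η'(t + 1/3) = η'(t)·ω for all t ∈ ℝ. -/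
theorem ω_ne_one : ω ≠ 1 := isPrimitiveRoot_ω.ne_one (by norm_num)

theorem ω_inv : ω⁻¹ = ω ^ 2 :=
  inv_eq_of_mul_eq_one_right (by linear_combination ω_pow_three)

theorem W_mulVec (v : Fin 3 → ℂ) :
    W.mulVec v = ![v 0 + v 1 + v 2, v 0 + ω * v 1 + ω ^ 2 * v 2,
      v 0 + ω ^ 2 * v 1 + ω * v 2] := by
  ext i
  fin_cases i <;> simp [W, Matrix.mulVec, dotProduct, Fin.sum_univ_three]

theorem J_mulVec (v : Fin 3 → ℂ) : J.mulVec v = ![v 1, v 2, v 0] := by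
  ext i
  fin_cases i <;> simp [J, Matrix.mulVec, dotProduct, Fin.sum_univ_three]

theorem W_mulVec_fourier (Δ : Fin 3 → ℂ) : W.mulVec ![ψ₀ Δ, ψ₁ Δ, ψ₂ Δ] = Δ := by
  have h := one_add_ω_add_ω_sq
  have h3 := ω_pow_three
  rw [W_mulVec]
  ext i
  fin_cases i <;> simp [ψ₀, ψ₁, ψ₂] <;> grind

theorem W_inv_mulVec (Δ : Fin 3 → ℂ) : W⁻¹.mulVec Δ = ![ψ₀ Δ, ψ₁ Δ, ψ₂ Δ] := by
  conv_lhs => rw [← W_mulVec_fourier Δ]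
  rw [Matrix.mulVec_mulVec, Matrix.nonsing_inv_mul _ isUnit_det_W, Matrix.one_mulVec]

theorem S_mulVec (a b : ℂ) (Δ : Fin 3 → ℂ) :
    (S a b).mulVec Δ = W.mulVec ![ψ₀ Δ, b * ψ₁ Δ, a * ψ₂ Δ] := by
  rw [S, ← Matrix.mulVec_mulVec, ← Matrix.mulVec_mulVec, W_inv_mulVec]
  congr 1
  ext i
  fin_cases i <;> simp [Matrix.mulVec_diagonal]

/-- `W` diagonalizes the cyclic shift `J`. -/
theorem J_mulVec_W_mulVec (x y z : ℂ) :
    J.mulVec (W.mulVec ![x, y, z]) = W.mulVec ![x, y * ω, z * ω⁻¹] := by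
  have h3 := ω_pow_three
  rw [J_mulVec, W_mulVec, W_mulVec, ω_inv]
  ext i
  fin_cases i <;> simp <;> grind

theorem W_mulVec_injective : Function.Injective W.mulVec :=
  Matrix.mulVec_injective_iff_isUnit.mpr ((Matrix.isUnit_iff_isUnit_det W).mpr isUnit_det_W)

theorem single_tracing_orbit_ascending_iff (Δ : Fin 3 → ℂ)
    (h1 : ψ₁ Δ ≠ 0) (h2 : ψ₂ Δ ≠ 0) (η η' : ℝ → ℂ) :
    (∀ t : ℝ, J.mulVec ((S (η t) (η' t)).mulVec Δ) =
        (S (η (t + 1/3)) (η' (t + 1/3))).mulVec Δ)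
    ↔ (∀ t : ℝ, η (t + 1/3) = η t * ω⁻¹ ∧ η' (t + 1/3) = η' t * ω) := by
  refine forall_congr' fun t => ?_
  rw [S_mulVec, S_mulVec, J_mulVec_W_mulVec, W_mulVec_injective.eq_iff]
  simp only [Matrix.vecCons_inj, true_and, and_true, mul_right_comm _ _ ω,
    mul_right_comm _ _ ω⁻¹, mul_left_inj' h1, mul_left_inj' h2]
  constructor
  · rintro ⟨hη', hη⟩
    exact ⟨hη.symm, hη'.symm⟩
  · rintro ⟨hη, hη'⟩
    exact ⟨hη'.symm, hη.symm⟩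
end

section
/- Let u,v ∈ ℝ and Δ = (0, 1, u+vi) ∈ ℂ³. For t ∈ ℝ set Δ(t) := S[e^{−2πit}, e^{2πit}]·Δ. Then every vertex of Δ(t), written z = X + iY with X,Y ∈ ℝ, lies on the Steiner circumscribed ellipse: v²·(X − (1+u)/3)² + (v − 2uv)·(X − (1+u)/3)·(Y − v/3) + (1 − u + u²)·(Y − v/3)² = v²/3. -/
theorem ω_eq : ω = -1 / 2 + (√3 / 2 : ℝ) * Complex.I := by
  have h : (2 * Real.pi * Complex.I / 3 : ℂ) =
      ((Real.pi - Real.pi / 3 : ℝ) : ℂ) * Complex.I := by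
    push_cast
    ring
  rw [ω, h, Complex.exp_mul_I, ← Complex.ofReal_cos, ← Complex.ofReal_sin, Real.cos_pi_sub,
    Real.sin_pi_sub, Real.cos_pi_div_three, Real.sin_pi_div_three]
  push_cast
  ring

/-- On conjugate parameters `p ± q i` the cevian operator is a real circulant matrix. -/
theorem S_conj_eq (p q : ℝ) :
    S (p - q * Complex.I) (p + q * Complex.I) =
      (!![(1 + 2 * p) / 3, (1 - p + √3 * q) / 3, (1 - p - √3 * q) / 3;
          (1 - p - √3 * q) / 3, (1 + 2 * p) / 3, (1 - p + √3 * q) / 3;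
          (1 - p + √3 * q) / 3, (1 - p - √3 * q) / 3, (1 + 2 * p) / 3] :
        Matrix (Fin 3) (Fin 3) ℝ).map Complex.ofReal := by
  have hω : (√3 : ℝ) * Complex.I = 2 * ω + 1 := by
    rw [ω_eq]
    push_cast
    ring
  have hs : ((√3 : ℝ) : ℂ) = -(2 * ω + 1) * Complex.I := by
    linear_combination (-Complex.I) * hω + (√3 : ℝ) * Complex.I_sq
  rw [S, W_inv]
  ext i j
  fin_cases i <;> fin_cases j <;>
    simp [W, Matrix.mul_apply, Fin.sum_univ_three, Matrix.vecMul_diagonal, hs] <;>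
    grind [ω_sq]

/-- A point with barycentric coordinates `(x, y, z)` relative to `0, 1, u + v i` satisfying
`x y + y z + z x = 0` lies on the Steiner circumellipse of that triangle. -/
theorem steiner_ellipse_of_barycentric (u v x y z : ℝ) (hsum : x + y + z = 1)
    (he : x * y + y * z + z * x = 0) :
    v ^ 2 * (y + z * u - (1 + u) / 3) ^ 2
      + (v - 2 * u * v) * (y + z * u - (1 + u) / 3) * (z * v - v / 3)
      + (1 - u + u ^ 2) * (z * v - v / 3) ^ 2 = v ^ 2 / 3 := by
  obtain rfl : x = 1 - y - z := by linarith
  linear_combination (-v ^ 2) * he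

theorem steiner_ellipse_orbit (u v : ℝ) (t : ℝ) (k : Fin 3) :
    let Δ : Fin 3 → ℂ := ![0, 1, (u : ℂ) + (v : ℂ) * Complex.I]
    let Δt : Fin 3 → ℂ :=
      (S (Complex.exp (-(2 * (Real.pi : ℂ) * Complex.I * (t : ℂ))))
         (Complex.exp (2 * (Real.pi : ℂ) * Complex.I * (t : ℂ)))).mulVec Δ
    let X : ℝ := (Δt k).re
    let Y : ℝ := (Δt k).im
    v ^ 2 * (X - (1 + u) / 3) ^ 2
      + (v - 2 * u * v) * (X - (1 + u) / 3) * (Y - v / 3)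
      + (1 - u + u ^ 2) * (Y - v / 3) ^ 2 = v ^ 2 / 3 := by
  intro Δ Δt X Y
  set p := Real.cos (2 * Real.pi * t)
  set q := Real.sin (2 * Real.pi * t)
  have hpq : p ^ 2 + q ^ 2 = 1 := Real.cos_sq_add_sin_sq _
  have h3 : √3 ^ 2 = 3 := Real.sq_sqrt (by norm_num)
  have hpos : Complex.exp (2 * (Real.pi : ℂ) * Complex.I * (t : ℂ)) = p + q * Complex.I := by
    rw [show 2 * (Real.pi : ℂ) * Complex.I * (t : ℂ) =
      ((2 * Real.pi * t : ℝ) : ℂ) * Complex.I by push_cast; ring, Complex.exp_mul_I,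
      ← Complex.ofReal_cos, ← Complex.ofReal_sin]
  have hneg : Complex.exp (-(2 * (Real.pi : ℂ) * Complex.I * (t : ℂ))) =
      p - q * Complex.I := by
    rw [show -(2 * (Real.pi : ℂ) * Complex.I * (t : ℂ)) =
      ((-(2 * Real.pi * t) : ℝ) : ℂ) * Complex.I by push_cast; ring, Complex.exp_mul_I,
      ← Complex.ofReal_cos, ← Complex.ofReal_sin, Real.cos_neg, Real.sin_neg,
      Complex.ofReal_neg, neg_mul, ← sub_eq_add_neg]
  obtain ⟨x, y, z, hsum, he, hX, hY⟩ : ∃ x y z : ℝ, x + y + z = 1 ∧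
      x * y + y * z + z * x = 0 ∧ X = y + z * u ∧ Y = z * v := by
    let A : Matrix (Fin 3) (Fin 3) ℝ :=
      !![(1 + 2 * p) / 3, (1 - p + √3 * q) / 3, (1 - p - √3 * q) / 3;
        (1 - p - √3 * q) / 3, (1 + 2 * p) / 3, (1 - p + √3 * q) / 3;
        (1 - p + √3 * q) / 3, (1 - p - √3 * q) / 3, (1 + 2 * p) / 3]
    have hΔt : Δt k = A k 1 + A k 2 * (u + v * Complex.I) := by
      simp only [Δt, hpos, hneg, S_conj_eq]
      simp [Matrix.mulVec, dotProduct, Fin.sum_univ_three, Δ, A]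
    refine ⟨A k 0, A k 1, A k 2, ?_, ?_, by simp [X, hΔt], by simp [Y, hΔt]⟩
    · fin_cases k <;> simp [A] <;> ring
    · fin_cases k <;> simp [A] <;> linear_combination (-1 / 3) * hpq - (q ^ 2 / 9) * h3
  rw [hX, hY]
  exact steiner_ellipse_of_barycentric u v x y z hsum he
end
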